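/- Define the Domb numbers D_n = ∑_{k=0}^{n} binom(n, k)² · binom(2k, k) · binom(2n−2k, n−k) for n ∈ ℕ. Then D_0 = 1, D_1 = 4, and for all n ≥ 2 the recurrence n³ · D_n − 2(2n−1)(5n² − 5n + 2) · D_{n−1} + 64(n−1)³ · D_{n−2} = 0 holds. -/

import Mathlib

def dombF (a b : ℕ) : ℚ :=
  ((a + b).choose a : ℚ) ^ 2 * ((2 * a).choose a : ℚ) * ((2 * b).choose b : ℚ)

theorem central_succ (b : ℕ) : ((2 * (b + 1)).choose (b + 1) : ℚ) =
    2 * (2 * b + 1) * ((2 * b).choose b : ℚ) / (b + 1) := by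
  have h := Nat.succ_mul_centralBinom_succ b
  simp only [Nat.centralBinom] at h
  have h' : ((b : ℚ) + 1) * ((2 * (b + 1)).choose (b + 1) : ℚ) =
    2 * (2 * b + 1) * ((2 * b).choose b : ℚ) := by exact_mod_cast h
  have : (b : ℚ) + 1 ≠ 0 := by positivity
  field_simp
  linarith

theorem dombF_b (a b : ℕ) :
    dombF a (b + 1) = 2 * (a + b + 1) ^ 2 * (2 * b + 1) / (b + 1) ^ 3 * dombF a b := by
  have h := Nat.choose_mul_succ_eq (a + b) a
  rw [show a + b + 1 - a = b + 1 by omega] at h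
  have hb : (b : ℚ) + 1 ≠ 0 := by positivity
  have h' : ((a + b).choose a : ℚ) * (a + b + 1) = ((a + b + 1).choose a : ℚ) * (b + 1) := by
    exact_mod_cast h
  have h2 : ((a + b + 1).choose a : ℚ) = ((a + b).choose a : ℚ) * (a + b + 1) / (b + 1) := by
    field_simp; linarith
  unfold dombF
  rw [← add_assoc, h2, central_succ]
  field_simp

theorem dombF_comm (a b : ℕ) : dombF a b = dombF b a := by
  unfold dombF
  rw [Nat.choose_symm_add, add_comm b a]
  ring

theorem dombF_a (a b : ℕ) :
    dombF (a + 1) b = 2 * (a + b + 1) ^ 2 * (2 * a + 1) / (a + 1) ^ 3 * dombF a b := by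
  rw [dombF_comm, dombF_b, dombF_comm b a]
  ring

def dombY (n k : ℚ) : ℚ :=
  (10 * n ^ 2 - 12 * n ^ 3 + (26 * n ^ 2 - 15 * n) * k + (6 - 18 * n) * k ^ 2 + 4 * k ^ 3) / n ^ 2

def dombT (n k : ℕ) : ℚ :=
  (k : ℚ) ^ 3 * dombF k (n - k) * dombY n k / (2 * ((n : ℚ) - k) - 1)

theorem domb_step (k m : ℕ) :
    ((k : ℚ) + m + 2) ^ 3 * dombF k (m + 2)
      - 2 * (2 * ((k : ℚ) + m + 2) - 1) *
        (5 * ((k : ℚ) + m + 2) ^ 2 - 5 * ((k : ℚ) + m + 2) + 2) * dombF k (m + 1)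
      + 64 * ((k : ℚ) + m + 1) ^ 3 * dombF k m
    = dombT (k + m + 2) (k + 1) - dombT (k + m + 2) k := by
  unfold dombT dombY
  rw [show k + m + 2 - (k + 1) = m + 1 by omega, show k + m + 2 - k = m + 1 + 1 by omega,
    show m + 2 = m + 1 + 1 by rfl, dombF_a, dombF_b k (m + 1), dombF_b k m]
  push_cast
  rw [show 2 * ((k : ℚ) + m + 2 - (k + 1)) - 1 = 2 * m + 1 by ring,
    show 2 * ((k : ℚ) + m + 2 - k) - 1 = 2 * m + 3 by ring]
  have h1 : (m : ℚ) + 1 ≠ 0 := by positivity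
  have h2 : (m : ℚ) + 1 + 1 ≠ 0 := by positivity
  have h3 : (k : ℚ) + 1 ≠ 0 := by positivity
  have h4 : (k : ℚ) + m + 2 ≠ 0 := by positivity
  have h5 : 2 * (m : ℚ) + 1 ≠ 0 := by positivity
  have h6 : 2 * (m : ℚ) + 3 ≠ 0 := by positivity
  field_simp
  ring

theorem domb_tail (N : ℕ) :
    ((N : ℚ) + 2) ^ 3 * (dombF (N + 1) 1 + dombF (N + 2) 0)
      - 2 * (2 * ((N : ℚ) + 2) - 1) *
        (5 * ((N : ℚ) + 2) ^ 2 - 5 * ((N : ℚ) + 2) + 2) * dombF (N + 1) 0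
      + dombT (N + 2) (N + 1) = 0 := by
  unfold dombT dombY
  rw [show N + 2 - (N + 1) = 0 + 1 by omega, dombF_a (N + 1) 0,
    show dombF (N + 1) 1 = dombF (N + 1) (0 + 1) from rfl, dombF_b (N + 1) 0]
  push_cast
  rw [show 2 * ((N : ℚ) + 2 - (N + 1)) - 1 = 1 by ring]
  have h1 : (N : ℚ) + 1 + 1 ≠ 0 := by positivity
  have h2 : (N : ℚ) + 2 ≠ 0 := by positivity
  field_simp
  ring

/-- The Domb numbers `D_n = ∑_{k=0}^n C(n,k)² C(2k,k) C(2n-2k,n-k)` satisfy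
`D_0 = 1`, `D_1 = 4`, and
`n³ D_n - 2(2n-1)(5n²-5n+2) D_{n-1} + 64(n-1)³ D_{n-2} = 0` for `n ≥ 2`. -/
theorem domb_recurrence (D : ℕ → ℤ)
    (hD : ∀ n, D n = ∑ k ∈ Finset.range (n + 1),
      (n.choose k : ℤ) ^ 2 * ((2 * k).choose k : ℤ) *
        ((2 * n - 2 * k).choose (n - k) : ℤ)) :
    D 0 = 1 ∧ D 1 = 4 ∧
    ∀ n : ℕ, 2 ≤ n →
      (n : ℤ) ^ 3 * D n
      - 2 * (2 * (n : ℤ) - 1) * (5 * (n : ℤ) ^ 2 - 5 * (n : ℤ) + 2) * D (n - 1)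
      + 64 * ((n : ℤ) - 1) ^ 3 * D (n - 2) = 0 := by
  refine ⟨by simp [hD], by simp [hD, Finset.sum_range_succ], ?_⟩
  intro n hn
  obtain ⟨N, rfl⟩ : ∃ N, n = N + 2 := ⟨n - 2, by omega⟩
  have hQ : ∀ n, (D n : ℚ) = ∑ k ∈ Finset.range (n + 1), dombF k (n - k) := by
    intro n
    rw [hD]
    push_cast
    refine Finset.sum_congr rfl fun k hk => ?_
    have hk' : k ≤ n := by simpa [Nat.lt_succ_iff] using hk
    unfold dombF
    rw [show k + (n - k) = n by omega, show 2 * n - 2 * k = 2 * (n - k) by omega]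
  rw [show N + 2 - 1 = N + 1 by omega, show N + 2 - 2 = N by omega]
  have key : ((N : ℚ) + 2) ^ 3 * D (N + 2)
      - 2 * (2 * ((N : ℚ) + 2) - 1) * (5 * ((N : ℚ) + 2) ^ 2 - 5 * ((N : ℚ) + 2) + 2) * D (N + 1)
      + 64 * ((N : ℚ) + 1) ^ 3 * D N = 0 := by
    have hs : ∑ k ∈ Finset.range (N + 1), (((N : ℚ) + 2) ^ 3 * dombF k (N + 2 - k)
      - 2 * (2 * ((N : ℚ) + 2) - 1) *
        (5 * ((N : ℚ) + 2) ^ 2 - 5 * ((N : ℚ) + 2) + 2) * dombF k (N + 1 - k)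
      + 64 * ((N : ℚ) + 1) ^ 3 * dombF k (N - k)) = dombT (N + 2) (N + 1) := by
      have h0 : dombT (N + 2) 0 = 0 := by simp [dombT]
      rw [← sub_zero (dombT (N + 2) (N + 1)), ← h0, ← Finset.sum_range_sub]
      refine Finset.sum_congr rfl fun k hk => ?_
      have hk' : k ≤ N := by simpa [Nat.lt_succ_iff] using hk
      obtain ⟨m, rfl⟩ := Nat.exists_eq_add_of_le hk'
      have := domb_step k m
      rw [show k + m + 2 - k = m + 2 by omega, show k + m + 1 - k = m + 1 by omega,
        show k + m - k = m by omega]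
      push_cast
      exact this
    rw [Finset.sum_add_distrib, Finset.sum_sub_distrib, ← Finset.mul_sum, ← Finset.mul_sum,
      ← Finset.mul_sum] at hs
    have ht := domb_tail N
    rw [hQ, hQ, hQ, Finset.sum_range_succ _ (N + 2), Finset.sum_range_succ _ (N + 1),
      Finset.sum_range_succ _ (N + 1)]
    rw [show N + 2 - (N + 2) = 0 by omega, show N + 1 - (N + 1) = 0 by omega,
      show N + 2 - (N + 1) = 1 by omega]
    linear_combination hs + ht
  have : ((((N + 2 : ℕ) : ℤ) ^ 3 * D (N + 2)
      - 2 * (2 * ((N + 2 : ℕ) : ℤ) - 1) * (5 * ((N + 2 : ℕ) : ℤ) ^ 2 - 5 * ((N + 2 : ℕ) : ℤ) + 2)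
        * D (N + 1)
      + 64 * (((N + 2 : ℕ) : ℤ) - 1) ^ 3 * D N : ℤ) : ℚ) = 0 := by
    push_cast
    linear_combination key
  exact_mod_cast this
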